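/- arXiv:1605.07507 — 2 statements merged into one kernel-verified Lean document; each statement's English description precedes it below -/
import Mathlib

section
/- Let f : ℝ → ℂ be continuous on (0,∞), let k ∈ ℕ, and let a_0, …, a_{2k+1} ∈ ℂ be such that: (i) there is C_0 > 0 with |f(t) - Σ_{j=0}^{2k+1} a_j·t^{-k+j/2}| ≤ C_0·t for all t ∈ (0,1]; (ii) there are C, c > 0 with |f(t)| ≤ C·exp(-c·t) for all t ≥ 1. Define H(z) = ∫_0^1 (f(t) - Σ_{j=0}^{2k} a_j·t^{-k+j/2})·t^{z-1} dt + Σ_{j=0}^{2k} a_j/(z - k + j/2) + ∫_1^∞ f(t)·t^{z-1} dt, and define G : ℂ → ℂ by G(z) = H(z)/Γ(z) for z ≠ 0 (Re z > -1/2, z not of the form k - j/2 with 0 ≤ j < 2k) and G(0) = a_{2k}. Then G(z) = (1/Γ(z)) ∫_0^∞ f(t)·t^{z-1} dt for all z with Re z > k, and G is continuous at 0; in particular the meromorphic continuation of the Mellin transform of f is holomorphic at 0 with value M[f](0) = a_{2k}. -/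
/-!
Write `S` for the partial sum of the expansion through the constant term `a (2 * k)`. On `(0, 1)`
the remainder satisfies `f - S = O(t ^ (1 / 2))`, since the first omitted term is
`a (2 * k + 1) * t ^ (1 / 2)` (`remainder_bound`).

For `k < re z` every function involved is integrable on its range, so the integral over `(0, ∞)`
splits at `1`, and on `(0, 1)` the contribution of `S` is computed termwise from
`∫ t in (0, 1), t ^ (w - 1) = 1 / w` for `0 < re w`.

Near `z = 0` the functional equation gives `G z = z * H z / Γ (z + 1)`. Both integrals in `H` stay
bounded for `|re z| < 1 / 4`, so after multiplication by `z` they tend to `0`; the same holds for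
the terms `a j / (z - k + j / 2)` with `j < 2 * k`, whose pole is not at `0`. Only the term
`j = 2 * k`, equal to `a (2 * k) / z`, survives, and `Γ 1 = 1`.
-/

open MeasureTheory Set Finset

lemma integrableOn_cpow_sub_one {w : ℂ} (hw : 0 < w.re) :
    IntegrableOn (fun t : ℝ => (t : ℂ) ^ (w - 1)) (Ioo 0 1) := by
  rw [← integrableOn_Ioc_iff_integrableOn_Ioo,
    ← intervalIntegrable_iff_integrableOn_Ioc_of_le zero_le_one]
  exact intervalIntegral.intervalIntegrable_cpow' (by simpa using hw)

lemma integral_cpow_sub_one {w : ℂ} (hw : 0 < w.re) :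
    ∫ t in Ioo (0 : ℝ) 1, (t : ℂ) ^ (w - 1) = 1 / w := by
  have hw0 : w ≠ 0 := by
    rintro rfl
    simp at hw
  rw [← integral_Ioc_eq_integral_Ioo, ← intervalIntegral.integral_of_le zero_le_one,
    integral_cpow (Or.inl (by simpa using hw))]
  simp [hw0]

/-- Beyond the constant term, the next term of the expansion has order `t ^ (1 / 2)`, which also
dominates the error `C₀ * t` on `(0, 1)`. -/
lemma remainder_bound (f : ℝ → ℂ) (k : ℕ) (a : ℕ → ℂ)
    (h0 : ∃ C₀ > (0 : ℝ), ∀ t ∈ Ioc (0 : ℝ) 1,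
      ‖f t - ∑ j ∈ range (2 * k + 2), a j * (t : ℂ) ^ (-(k : ℂ) + j / 2)‖ ≤ C₀ * t) :
    ∃ D : ℝ, 0 ≤ D ∧ ∀ t ∈ Ioo (0 : ℝ) 1,
      ‖f t - ∑ j ∈ range (2 * k + 1), a j * (t : ℂ) ^ (-(k : ℂ) + j / 2)‖
        ≤ D * t ^ (1 / 2 : ℝ) := by
  obtain ⟨C, hC, h⟩ := h0
  refine ⟨C + ‖a (2 * k + 1)‖, by positivity, fun t ht => ?_⟩
  have h1 := h t ⟨ht.1, ht.2.le⟩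
  rw [sum_range_succ] at h1
  set S := ∑ j ∈ range (2 * k + 1), a j * (t : ℂ) ^ (-(k : ℂ) + j / 2)
  have he : (-(k : ℂ) + ((2 * k + 1 : ℕ) : ℂ) / 2) = ((1 / 2 : ℝ) : ℂ) := by
    push_cast
    ring
  have h2 : ‖a (2 * k + 1) * (t : ℂ) ^ (-(k : ℂ) + ((2 * k + 1 : ℕ) : ℂ) / 2)‖
      = ‖a (2 * k + 1)‖ * t ^ (1 / 2 : ℝ) := by
    rw [he, norm_mul, Complex.norm_cpow_eq_rpow_re_of_pos ht.1, Complex.ofReal_re]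
  have h3 : t ≤ t ^ (1 / 2 : ℝ) := by
    simpa using Real.rpow_le_rpow_of_exponent_ge ht.1 ht.2.le (by norm_num : (1 / 2 : ℝ) ≤ 1)
  calc ‖f t - S‖ = ‖(f t - (S + a (2 * k + 1) *
          (t : ℂ) ^ (-(k : ℂ) + ((2 * k + 1 : ℕ) : ℂ) / 2))) +
          a (2 * k + 1) * (t : ℂ) ^ (-(k : ℂ) + ((2 * k + 1 : ℕ) : ℂ) / 2)‖ := by
        congr 1
        ring
    _ ≤ C * t + ‖a (2 * k + 1)‖ * t ^ (1 / 2 : ℝ) := (norm_add_le _ _).trans (by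
        rw [h2]
        gcongr)
    _ ≤ (C + ‖a (2 * k + 1)‖) * t ^ (1 / 2 : ℝ) := by
        rw [add_mul]
        gcongr

lemma integrableOn_rpow_Ioo {r : ℝ} (hr : -1 < r) (D : ℝ) :
    IntegrableOn (fun t : ℝ => D * t ^ r) (Ioo 0 1) := by
  refine Integrable.const_mul ?_ D
  change IntegrableOn (fun t : ℝ => t ^ r) (Ioo 0 1)
  rw [← integrableOn_Ioc_iff_integrableOn_Ioo,
    ← intervalIntegrable_iff_integrableOn_Ioc_of_le zero_le_one]
  exact intervalIntegral.intervalIntegrable_rpow' hr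

lemma continuousOn_cpow_Ioi (w : ℂ) : ContinuousOn (fun t : ℝ => (t : ℂ) ^ w) (Ioi 0) :=
  fun t ht => (Complex.continuousAt_ofReal_cpow_const t w
    (Or.inr (ne_of_gt ht))).continuousWithinAt

lemma mul_cpow_norm_le {g : ℂ} {t D r s : ℝ} {z : ℂ} (ht : 0 < t)
    (hg : ‖g‖ ≤ D * t ^ r) (hs : s = r + (z.re - 1)) :
    ‖g * (t : ℂ) ^ (z - 1)‖ ≤ D * t ^ s := by
  rw [norm_mul, Complex.norm_cpow_eq_rpow_re_of_pos ht, hs, Real.rpow_add ht, ← mul_assoc]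
  simp only [Complex.sub_re, Complex.one_re]
  gcongr

/-- Multiplying by `z` kills, in the limit `z → 0`, anything bounded near `0`. -/
lemma tendsto_mul_zero_of_bound {F : ℂ → ℂ} {B : ℝ}
    (hB : ∀ z : ℂ, |z.re| < 1 / 4 → ‖F z‖ ≤ B) :
    Filter.Tendsto (fun z => z * F z) (nhdsWithin 0 {0}ᶜ) (nhds 0) := by
  refine Filter.Tendsto.zero_mul_isBoundedUnder_le
    (Filter.tendsto_id.mono_left nhdsWithin_le_nhds) ⟨B, ?_⟩
  rw [Filter.eventually_map]
  refine Filter.Eventually.filter_mono nhdsWithin_le_nhds ?_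
  filter_upwards [Metric.ball_mem_nhds (0 : ℂ) (by norm_num : (0 : ℝ) < 1 / 4)] with z hz
  exact hB z ((Complex.abs_re_le_norm z).trans_lt (by simpa using hz))

lemma tendsto_mul_term (k j : ℕ) (c : ℂ) :
    Filter.Tendsto (fun z : ℂ => z * (c / (z - k + j / 2))) (nhdsWithin 0 {0}ᶜ)
      (nhds (if j = 2 * k then c else 0)) := by
  split_ifs with h
  · refine tendsto_const_nhds.congr' ?_
    filter_upwards [self_mem_nhdsWithin] with z hz
    have hz : z ≠ 0 := hz
    have : z - k + (j : ℂ) / 2 = z := by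
      rw [h]
      push_cast
      ring
    rw [this]
    field_simp
  · refine Filter.Tendsto.mono_left ?_ nhdsWithin_le_nhds
    have hne : (0 : ℂ) - k + (j : ℂ) / 2 ≠ 0 := by
      intro h'
      apply h
      have : (j : ℂ) = 2 * k := by linear_combination 2 * h'
      exact_mod_cast this
    have : ContinuousAt (fun z : ℂ => z * (c / (z - k + j / 2))) 0 := by
      refine continuousAt_id.mul (continuousAt_const.div (by fun_prop) hne)
    simpa [ContinuousAt] using this

/-- The meromorphic continuation of the Mellin transform of `f` is holomorphic at `0`
with value `M[f](0) = a (2*k)`, the coefficient of `t^0` in the asymptotic expansion. -/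
theorem mellin_continuous_at_zero
    (f : ℝ → ℂ) (k : ℕ) (a : ℕ → ℂ) (hf : ContinuousOn f (Ioi 0))
    (h0 : ∃ C₀ > (0 : ℝ), ∀ t ∈ Ioc (0 : ℝ) 1,
      ‖f t - ∑ j ∈ range (2 * k + 2), a j * (t : ℂ) ^ (-(k : ℂ) + j / 2)‖ ≤ C₀ * t)
    (hdecay : ∃ C > (0 : ℝ), ∃ c > (0 : ℝ), ∀ t : ℝ, 1 ≤ t → ‖f t‖ ≤ C * Real.exp (-c * t))
    (G : ℂ → ℂ)
    (hG : ∀ z : ℂ, G z = if z = 0 then a (2 * k) else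
      ((∫ t in Ioo (0 : ℝ) 1,
          (f t - ∑ j ∈ range (2 * k + 1), a j * (t : ℂ) ^ (-(k : ℂ) + j / 2)) *
            (t : ℂ) ^ (z - 1)) +
        ∑ j ∈ range (2 * k + 1), a j / (z - k + j / 2) +
        ∫ t in Ici (1 : ℝ), f t * (t : ℂ) ^ (z - 1)) / Complex.Gamma z) :
    (∀ z : ℂ, (k : ℝ) < z.re →
      G z = (Complex.Gamma z)⁻¹ * ∫ t in Ioi (0 : ℝ), f t * (t : ℂ) ^ (z - 1)) ∧
    ContinuousAt G 0 := by
  obtain ⟨D, hD, hrem⟩ := remainder_bound f k a h0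
  obtain ⟨C, hC, c, hc, hdec⟩ := hdecay
  constructor
  · intro z hz
    have hk : (0 : ℝ) ≤ k := Nat.cast_nonneg k
    have hzre : 0 < z.re := hk.trans_lt hz
    have hz0 : z ≠ 0 := by
      rintro rfl
      simp at hzre
    -- The remainder part on `(0, 1)` is dominated by `D * t ^ (re z - 1 / 2)`.
    have hI1 : IntegrableOn (fun t : ℝ =>
        (f t - ∑ j ∈ range (2 * k + 1), a j * (t : ℂ) ^ (-(k : ℂ) + j / 2)) *
          (t : ℂ) ^ (z - 1)) (Ioo 0 1) := by
      refine Integrable.mono' (integrableOn_rpow_Ioo (r := 1 / 2 + (z.re - 1)) (by linarith) D)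
        ?_ ?_
      · refine ContinuousOn.aestronglyMeasurable ?_ measurableSet_Ioo
        refine ContinuousOn.mono (s := Ioi 0) ?_ Ioo_subset_Ioi_self
        exact (hf.sub (continuousOn_finsetSum _ fun j _ =>
          continuousOn_const.mul (continuousOn_cpow_Ioi _))).mul (continuousOn_cpow_Ioi _)
      · filter_upwards [ae_restrict_mem measurableSet_Ioo] with t ht
        exact mul_cpow_norm_le ht.1 (hrem t ht) rfl
    have hw : ∀ j : ℕ, 0 < (z - k + (j : ℂ) / 2).re := by
      intro j
      have hj : (0 : ℝ) ≤ j := Nat.cast_nonneg j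
      have : (z - k + (j : ℂ) / 2).re = z.re - k + j / 2 := by simp
      rw [this]
      linarith
    have hterm : ∀ j ∈ range (2 * k + 1), IntegrableOn (fun t : ℝ =>
        a j * (t : ℂ) ^ ((z - k + (j : ℂ) / 2) - 1)) (Ioo 0 1) := fun j _ =>
      (integrableOn_cpow_sub_one (hw j)).const_mul (a j)
    have hI2 : IntegrableOn (fun t : ℝ => ∑ j ∈ range (2 * k + 1),
        a j * (t : ℂ) ^ ((z - k + (j : ℂ) / 2) - 1)) (Ioo 0 1) :=
      integrable_finsetSum _ hterm
    have hI2v : ∫ t in Ioo (0 : ℝ) 1, ∑ j ∈ range (2 * k + 1),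
        a j * (t : ℂ) ^ ((z - k + (j : ℂ) / 2) - 1)
        = ∑ j ∈ range (2 * k + 1), a j / (z - k + j / 2) := by
      rw [integral_finsetSum _ hterm]
      refine Finset.sum_congr rfl fun j _ => ?_
      rw [integral_const_mul, integral_cpow_sub_one (hw j), mul_one_div]
    have hsplit : EqOn (fun t : ℝ => f t * (t : ℂ) ^ (z - 1)) (fun t : ℝ =>
        (f t - ∑ j ∈ range (2 * k + 1), a j * (t : ℂ) ^ (-(k : ℂ) + j / 2)) *
          (t : ℂ) ^ (z - 1) + ∑ j ∈ range (2 * k + 1),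
        a j * (t : ℂ) ^ ((z - k + (j : ℂ) / 2) - 1)) (Ioo 0 1) := by
      intro t ht
      have ht0 : (t : ℂ) ≠ 0 := by exact_mod_cast ht.1.ne'
      have : ∑ j ∈ range (2 * k + 1), a j * (t : ℂ) ^ ((z - k + (j : ℂ) / 2) - 1)
          = (∑ j ∈ range (2 * k + 1), a j * (t : ℂ) ^ (-(k : ℂ) + j / 2)) *
            (t : ℂ) ^ (z - 1) := by
        rw [Finset.sum_mul]
        refine Finset.sum_congr rfl fun j _ => ?_
        rw [mul_assoc, ← Complex.cpow_add _ _ ht0]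
        congr 2
        ring
      simp only [this]
      ring
    have hIf1 : IntegrableOn (fun t : ℝ => f t * (t : ℂ) ^ (z - 1)) (Ioo 0 1) :=
      (integrableOn_congr_fun hsplit measurableSet_Ioo).2 (hI1.add hI2)
    have hIf2 : IntegrableOn (fun t : ℝ => f t * (t : ℂ) ^ (z - 1)) (Ici 1) := by
      have hg : IntegrableOn (fun t : ℝ => C * (t ^ (z.re - 1) * Real.exp (-c * t ^ (1 : ℝ))))
          (Ici 1) :=
        ((integrableOn_rpow_mul_exp_neg_mul_rpow (by linarith) one_pos hc).mono_set
          (Ici_subset_Ioi.2 one_pos)).const_mul C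
      refine Integrable.mono' hg ?_ ?_
      · refine ContinuousOn.aestronglyMeasurable ?_ measurableSet_Ici
        exact (hf.mul (continuousOn_cpow_Ioi _)).mono (Ici_subset_Ioi.2 one_pos)
      · filter_upwards [ae_restrict_mem measurableSet_Ici] with t ht
        have ht0 : 0 < t := one_pos.trans_le ht
        rw [norm_mul, Complex.norm_cpow_eq_rpow_re_of_pos ht0, Real.rpow_one,
          mul_comm (t ^ (z.re - 1)), ← mul_assoc]
        simp only [Complex.sub_re, Complex.one_re]
        gcongr
        exact hdec t ht
    have hdisj : Disjoint (Ioo (0 : ℝ) 1) (Ici 1) :=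
      Set.disjoint_left.2 fun t h1 h2 => not_le.2 h1.2 h2
    rw [hG, if_neg hz0, ← Ioo_union_Ici_eq_Ioi (zero_lt_one' ℝ),
      setIntegral_union hdisj measurableSet_Ici hIf1 hIf2,
      setIntegral_congr_fun measurableSet_Ioo hsplit, integral_add hI1 hI2, hI2v]
    rw [div_eq_inv_mul]
  · have hGu : G = Function.update G 0 (a (2 * k)) := by
      rw [eq_comm, Function.update_eq_self_iff]
      simp [hG]
    rw [hGu, continuousAt_update_same]
    have hT1 := tendsto_mul_zero_of_bound
      (F := fun z => ∫ t in Ioo (0 : ℝ) 1,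
          (f t - ∑ j ∈ range (2 * k + 1), a j * (t : ℂ) ^ (-(k : ℂ) + j / 2)) *
            (t : ℂ) ^ (z - 1))
      (B := ∫ t in Ioo (0 : ℝ) 1, D * t ^ (-3 / 4 : ℝ)) (by
        intro z hz
        refine norm_integral_le_of_norm_le (integrableOn_rpow_Ioo (by norm_num) D) ?_
        filter_upwards [ae_restrict_mem measurableSet_Ioo] with t ht
        refine (mul_cpow_norm_le ht.1 (hrem t ht) rfl).trans ?_
        -- Here `1 / 2 + (re z - 1) > -3 / 4`, and powers of `t < 1` decrease in the exponent.
        refine mul_le_mul_of_nonneg_left ?_ hD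
        exact Real.rpow_le_rpow_of_exponent_ge ht.1 ht.2.le (by linarith [(abs_lt.1 hz).1]))
    have hT3 := tendsto_mul_zero_of_bound
      (F := fun z => ∫ t in Ici (1 : ℝ), f t * (t : ℂ) ^ (z - 1))
      (B := ∫ t in Ici (1 : ℝ), C * Real.exp (-c * t)) (by
        intro z hz
        have hg : IntegrableOn (fun t : ℝ => C * Real.exp (-c * t)) (Ici 1) :=
          ((exp_neg_integrableOn_Ioi 0 hc).mono_set (Ici_subset_Ioi.2 one_pos)).const_mul C
        refine norm_integral_le_of_norm_le hg ?_
        filter_upwards [ae_restrict_mem measurableSet_Ici] with t ht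
        have ht0 : 0 < t := one_pos.trans_le ht
        rw [norm_mul, Complex.norm_cpow_eq_rpow_re_of_pos ht0]
        have h1 : t ^ (z - 1).re ≤ 1 := Real.rpow_le_one_of_one_le_of_nonpos ht (by
          simp only [Complex.sub_re, Complex.one_re]
          linarith [(abs_lt.1 hz).2])
        exact (mul_le_of_le_one_right (norm_nonneg _) h1).trans (hdec t ht))
    have hT2 : Filter.Tendsto (fun z : ℂ => ∑ j ∈ range (2 * k + 1), z * (a j / (z - k + j / 2)))
        (nhdsWithin 0 {0}ᶜ) (nhds (a (2 * k))) := by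
      have := tendsto_finsetSum (range (2 * k + 1))
        fun j _ => tendsto_mul_term k j (a j)
      simpa [Finset.sum_ite_eq'] using this
    have hΓ : Filter.Tendsto (fun z : ℂ => Complex.Gamma (z + 1)) (nhdsWithin 0 {0}ᶜ)
        (nhds 1) := by
      refine Filter.Tendsto.mono_left ?_ nhdsWithin_le_nhds
      have h1 : ContinuousAt Complex.Gamma (0 + 1) := by
        refine (Complex.differentiableAt_Gamma _ fun m hm => ?_).continuousAt
        have := congrArg Complex.re hm
        simp at this
        linarith [(Nat.cast_nonneg m : (0 : ℝ) ≤ m)]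
      have h2 : ContinuousAt (fun z : ℂ => Complex.Gamma (z + 1)) 0 :=
        ContinuousAt.comp (g := Complex.Gamma) (f := fun z : ℂ => z + 1) h1 (by fun_prop)
      simpa [ContinuousAt] using h2
    have hlim := ((hT1.add hT2).add hT3).div hΓ one_ne_zero
    simp only [zero_add, add_zero, div_one] at hlim
    refine hlim.congr' ?_
    filter_upwards [self_mem_nhdsWithin] with z hz
    have hz : z ≠ 0 := hz
    simp only [Pi.div_apply]
    rw [hG, if_neg hz, Complex.Gamma_add_one z hz, ← Finset.mul_sum, ← mul_add, ← mul_add,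
      mul_div_mul_left _ _ hz]
end

section
/- Let f : ℝ → ℂ be continuous on (0,∞), let k ∈ ℕ, and let a_0, …, a_{2k+1} ∈ ℂ be such that: (i) there is C_0 > 0 with |f(t) - Σ_{j=0}^{2k+1} a_j·t^{-k+j/2}| ≤ C_0·t for all t ∈ (0,1]; (ii) there are C, c > 0 with |f(t)| ≤ C·exp(-c·t) for all t ≥ 1. Define G : ℂ → ℂ by G(z) = (1/Γ(z))·[∫_0^1 (f(t) - Σ_{j=0}^{2k} a_j·t^{-k+j/2})·t^{z-1} dt + Σ_{j=0}^{2k} a_j/(z - k + j/2) + ∫_1^∞ f(t)·t^{z-1} dt] for z near 0, z ≠ 0, and G(0) = a_{2k}. Then G is differentiable at 0 and G'(0) = ∫_0^1 (f(t) - Σ_{j=0}^{2k} a_j·t^{-k+j/2})·t^{-1} dt + ∫_1^∞ f(t)·t^{-1} dt + Σ_{j=0}^{2k-1} a_j/(j/2 - k) + γ·a_{2k}, where γ is the Euler–Mascheroni constant (so that γ = -Γ'(1)). -/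
/-!
The bracket in `G` is a sum of two Mellin transforms, that of the remainder
`f - Σ_{j ≤ 2k} a_j t^{-k+j/2}` cut off to `(0,1)` and that of `f` cut off to `[1,∞)`, and of a
rational function. The remainder is `O(t^{1/2})` at `0`, because its leading term is
`a_{2k+1} t^{1/2}`, so both transforms are holomorphic near `0`; the only pole of the rational
part at `0` is `a_{2k}/z`. As `1/Γ(z) = z/Γ(z+1)`, this gives, at every `z`,
`G(z) = (z · H(z) + a_{2k}) / Γ(z+1)` with `H` holomorphic at `0`. Hence
`G'(0) = H(0) - a_{2k} Γ'(1) = H(0) + γ a_{2k}`.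
-/

open MeasureTheory Set Finset

lemma mellin_indicator (u : ℝ → ℂ) {S : Set ℝ} (hS : MeasurableSet S) (hS0 : S ⊆ Ioi 0) (z : ℂ) :
    mellin (S.indicator u) z = ∫ t in S, u t * (t : ℂ) ^ (z - 1) := by
  have h : (fun t : ℝ => (t : ℂ) ^ (z - 1) • S.indicator u t)
      = S.indicator (fun t => u t * (t : ℂ) ^ (z - 1)) := by
    funext t
    by_cases ht : t ∈ S <;> simp [ht, mul_comm]
  rw [mellin, h, setIntegral_indicator hS, inter_eq_self_of_subset_right hS0]

lemma locallyIntegrableOn_indicator {u : ℝ → ℂ} (hu : ContinuousOn u (Ioi 0)) {S : Set ℝ}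
    (hS : MeasurableSet S) : LocallyIntegrableOn (S.indicator u) (Ioi 0) := by
  intro x hx
  obtain ⟨V, hV, hVi⟩ := hu.locallyIntegrableOn (μ := volume) measurableSet_Ioi x hx
  exact ⟨V, hV, hVi.indicator hS⟩

lemma differentiableAt_mellin_indicator_Ioo {g : ℝ → ℂ} (hg : ContinuousOn g (Ioi 0)) {K : ℝ}
    (hK : ∀ t ∈ Ioc (0 : ℝ) 1, ‖g t‖ ≤ K * t ^ (1 / 2 : ℝ)) :
    DifferentiableAt ℂ (mellin ((Ioo (0 : ℝ) 1).indicator g)) 0 := by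
  refine mellin_differentiableAt_of_isBigO_rpow (a := 1) (b := -(1 / 2))
    (locallyIntegrableOn_indicator hg measurableSet_Ioo) ?_ (by simp) ?_ (by simp)
  · refine Asymptotics.IsBigO.of_bound 0 ?_
    filter_upwards [Filter.eventually_ge_atTop 1] with t ht
    simp [not_lt.mpr ht]
  · refine Asymptotics.IsBigO.of_bound K ?_
    filter_upwards [Ioo_mem_nhdsGT (zero_lt_one' ℝ)] with t ht
    rw [indicator_of_mem ht, neg_neg, Real.norm_of_nonneg (Real.rpow_nonneg ht.1.le _)]
    exact hK t ⟨ht.1, ht.2.le⟩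

lemma differentiableAt_mellin_indicator_Ici {f : ℝ → ℂ} (hf : ContinuousOn f (Ioi 0))
    {C c : ℝ} (hc : 0 < c) (h : ∀ t : ℝ, 1 ≤ t → ‖f t‖ ≤ C * Real.exp (-c * t)) :
    DifferentiableAt ℂ (mellin ((Ici (1 : ℝ)).indicator f)) 0 := by
  refine mellin_differentiableAt_of_isBigO_rpow_exp (a := c) (b := -1) hc
    (locallyIntegrableOn_indicator hf measurableSet_Ici) ?_ ?_ (by simp)
  · refine Asymptotics.IsBigO.of_bound C ?_
    filter_upwards [Filter.eventually_ge_atTop 1] with t ht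
    rw [indicator_of_mem (show t ∈ Set.Ici (1 : ℝ) from ht),
      Real.norm_of_nonneg (Real.exp_pos _).le]
    exact h t ht
  · refine Asymptotics.IsBigO.of_bound 0 ?_
    filter_upwards [Ioo_mem_nhdsGT (zero_lt_one' ℝ)] with t ht
    simp [not_le.mpr ht.2]

/-- Dropping the `j = 2k + 1` term `a_{2k+1} t^{1/2}` from the expansion leaves a remainder
of order `t^{1/2}`. -/
lemma norm_remainder_le {f : ℝ → ℂ} {k : ℕ} {a : ℕ → ℂ} {C₀ : ℝ} (hC₀ : 0 ≤ C₀) {t : ℝ}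
    (ht : t ∈ Ioc (0 : ℝ) 1)
    (h : ‖f t - ∑ j ∈ range (2 * k + 2), a j * (t : ℂ) ^ (-(k : ℂ) + j / 2)‖ ≤ C₀ * t) :
    ‖f t - ∑ j ∈ range (2 * k + 1), a j * (t : ℂ) ^ (-(k : ℂ) + j / 2)‖
      ≤ (C₀ + ‖a (2 * k + 1)‖) * t ^ (1 / 2 : ℝ) := by
  rw [sum_range_succ] at h
  have he : (-(k : ℂ) + ((2 * k + 1 : ℕ) : ℂ) / 2) = ((1 / 2 : ℝ) : ℂ) := by
    push_cast; ring
  have hn : ‖a (2 * k + 1) * (t : ℂ) ^ (-(k : ℂ) + ((2 * k + 1 : ℕ) : ℂ) / 2)‖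
      = ‖a (2 * k + 1)‖ * t ^ (1 / 2 : ℝ) := by
    rw [norm_mul, he, Complex.norm_cpow_eq_rpow_re_of_pos ht.1, Complex.ofReal_re]
  have hle : t ≤ t ^ (1 / 2 : ℝ) := by
    simpa using Real.rpow_le_rpow_of_exponent_ge ht.1 ht.2 (by norm_num : (1 / 2 : ℝ) ≤ 1)
  calc _ = ‖(f t - (∑ j ∈ range (2 * k + 1), a j * (t : ℂ) ^ (-(k : ℂ) + j / 2)
          + a (2 * k + 1) * (t : ℂ) ^ (-(k : ℂ) + ((2 * k + 1 : ℕ) : ℂ) / 2)))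
          + a (2 * k + 1) * (t : ℂ) ^ (-(k : ℂ) + ((2 * k + 1 : ℕ) : ℂ) / 2)‖ := by
        congr 1; ring
    _ ≤ C₀ * t + ‖a (2 * k + 1)‖ * t ^ (1 / 2 : ℝ) := by
        refine (norm_add_le _ _).trans ?_
        rw [hn]
        exact add_le_add h le_rfl
    _ ≤ _ := by
        rw [add_mul]
        gcongr

lemma continuousOn_remainder {f : ℝ → ℂ} (hf : ContinuousOn f (Ioi 0)) (k n : ℕ) (a : ℕ → ℂ) :
    ContinuousOn (fun t : ℝ => f t - ∑ j ∈ range n, a j * (t : ℂ) ^ (-(k : ℂ) + j / 2))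
      (Ioi 0) := by
  refine hf.sub (continuousOn_finsetSum _ fun j _ => continuousOn_const.mul ?_)
  intro t ht
  exact (Complex.continuousAt_ofReal_cpow_const _ _ (Or.inr (ne_of_gt ht))).continuousWithinAt

/-- Derivative at `0` of the meromorphic continuation of the Mellin transform:
`G'(0) = ∫_0^1 (f(t) - Σ_{j=0}^{2k} a_j t^{-k+j/2}) t⁻¹ dt + ∫_1^∞ f(t) t⁻¹ dt
+ Σ_{j=0}^{2k-1} a_j/(j/2 - k) + γ · a_{2k}`, with `γ` the Euler–Mascheroni constant. -/
theorem mellin_deriv_at_zero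
    (f : ℝ → ℂ) (k : ℕ) (a : ℕ → ℂ) (hf : ContinuousOn f (Ioi 0))
    (h0 : ∃ C₀ > (0 : ℝ), ∀ t ∈ Ioc (0 : ℝ) 1,
      ‖f t - ∑ j ∈ range (2 * k + 2), a j * (t : ℂ) ^ (-(k : ℂ) + j / 2)‖ ≤ C₀ * t)
    (hdecay : ∃ C > (0 : ℝ), ∃ c > (0 : ℝ), ∀ t : ℝ, 1 ≤ t → ‖f t‖ ≤ C * Real.exp (-c * t))
    (G : ℂ → ℂ)
    (hG : ∀ z : ℂ, G z = if z = 0 then a (2 * k) else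
      ((∫ t in Ioo (0 : ℝ) 1,
          (f t - ∑ j ∈ range (2 * k + 1), a j * (t : ℂ) ^ (-(k : ℂ) + j / 2)) *
            (t : ℂ) ^ (z - 1)) +
        ∑ j ∈ range (2 * k + 1), a j / (z - k + j / 2) +
        ∫ t in Ici (1 : ℝ), f t * (t : ℂ) ^ (z - 1)) / Complex.Gamma z) :
    HasDerivAt G
      ((∫ t in Ioo (0 : ℝ) 1,
          (f t - ∑ j ∈ range (2 * k + 1), a j * (t : ℂ) ^ (-(k : ℂ) + j / 2)) * (t : ℂ)⁻¹) +
        (∫ t in Ici (1 : ℝ), f t * (t : ℂ)⁻¹) +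
        (∑ j ∈ range (2 * k), a j / ((j : ℂ) / 2 - k)) +
        (Real.eulerMascheroniConstant : ℂ) * a (2 * k))
      0 := by
  obtain ⟨C₀, hC₀, h0⟩ := h0
  obtain ⟨C, -, c, hc, hdecay⟩ := hdecay
  set g : ℝ → ℂ := fun t =>
    f t - ∑ j ∈ range (2 * k + 1), a j * (t : ℂ) ^ (-(k : ℂ) + j / 2)
  set M₁ := mellin ((Ioo (0 : ℝ) 1).indicator g)
  set M₂ := mellin ((Ici (1 : ℝ)).indicator f)
  set S : ℂ → ℂ := fun z => ∑ j ∈ range (2 * k), a j / (z - k + j / 2)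
  have hM₁ : ∀ z, M₁ z = ∫ t in Ioo (0 : ℝ) 1, g t * (t : ℂ) ^ (z - 1) :=
    mellin_indicator g measurableSet_Ioo fun t ht => ht.1
  have hM₂ : ∀ z, M₂ z = ∫ t in Ici (1 : ℝ), f t * (t : ℂ) ^ (z - 1) :=
    mellin_indicator f measurableSet_Ici fun t ht => lt_of_lt_of_le (zero_lt_one' ℝ) ht
  have hd₁ : DifferentiableAt ℂ M₁ 0 :=
    differentiableAt_mellin_indicator_Ioo (continuousOn_remainder hf k _ a)
      fun t ht => norm_remainder_le hC₀.le ht (h0 t ht)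
  have hd₂ : DifferentiableAt ℂ M₂ 0 := differentiableAt_mellin_indicator_Ici hf hc hdecay
  have hdS : DifferentiableAt ℂ S 0 := by
    refine DifferentiableAt.fun_sum fun j hj => ?_
    have hne : (0 : ℂ) - k + j / 2 ≠ 0 := by
      intro h
      have h2 : (j : ℂ) = ((2 * k : ℕ) : ℂ) := by push_cast; linear_combination 2 * h
      exact (Finset.mem_range.mp hj).ne (Nat.cast_injective h2)
    exact (differentiableAt_const _).div (by fun_prop) hne
  have hGz : ∀ z, G z = (z * (M₁ z + M₂ z + S z) + a (2 * k)) / Complex.Gamma (z + 1) := by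
    intro z
    rw [hG]
    split_ifs with hz
    · simp [hz]
    · have hlast : z - (k : ℂ) + ((2 * k : ℕ) : ℂ) / 2 = z := by push_cast; ring
      rw [← hM₁, ← hM₂, sum_range_succ, hlast, Complex.Gamma_add_one z hz]
      -- The factor `z` cancels also where `Γ z = 0` in the sense of Lean's totalised `Γ`.
      rw [← mul_div_mul_left _ (Complex.Gamma z) hz]
      congr 1
      change z * (M₁ z + (S z + a (2 * k) / z) + M₂ z) = _
      field_simp
      ring
  have hΓ : HasDerivAt (fun z : ℂ => Complex.Gamma (z + 1))
      (-(Real.eulerMascheroniConstant : ℂ)) 0 := by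
    refine HasDerivAt.comp_add_const 0 1 ?_
    rw [zero_add]
    exact Complex.hasDerivAt_Gamma_one
  have hD := (((hasDerivAt_id (0 : ℂ)).mul
    ((hd₁.add hd₂).add hdS).hasDerivAt).add_const (a (2 * k))).div hΓ (by simp)
  have hval₁ : M₁ 0 = ∫ t in Ioo (0 : ℝ) 1, g t * (t : ℂ)⁻¹ := by
    simp only [hM₁, zero_sub, Complex.cpow_neg_one]
  have hval₂ : M₂ 0 = ∫ t in Ici (1 : ℝ), f t * (t : ℂ)⁻¹ := by
    simp only [hM₂, zero_sub, Complex.cpow_neg_one]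
  have hvalS : S 0 = ∑ j ∈ range (2 * k), a j / ((j : ℂ) / 2 - k) :=
    Finset.sum_congr rfl fun j _ => by congr 1; ring
  rw [← hval₁, ← hval₂, ← hvalS]
  rw [funext hGz]
  refine HasDerivAt.congr_deriv hD ?_
  simp [mul_comm]
end
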